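/- arXiv:1211.1811 — 2 statements merged into one kernel-verified Lean document; each statement's English description precedes it below -/
import Mathlib

section
/- For every t > 0 the following identity holds: Σ_{n∈ℤ} (−1)ⁿ (2n+1) e^{−(n²+n)t} = π^{3/2} · t^{−3/2} · e^{t/4} · Σ_{k∈ℤ} (−1)^k (2k+1) e^{−(2k+1)²π²/(4t)}, where both series converge absolutely. -/
open Real

lemma aux_hasSum (t : ℝ) (ht : 0 < t) (τ : ℂ) (hτ : τ = Complex.I * t / π) :
    HasSum (fun n : ℤ => (((-1 : ℝ) ^ n * (2 * (n : ℝ) + 1) *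
      Real.exp (-((n : ℝ) ^ 2 + (n : ℝ)) * t) : ℝ) : ℂ))
      (jacobiTheta₂' (1/2 + τ/2) τ / (π * Complex.I) + jacobiTheta₂ (1/2 + τ/2) τ) := by
  have hpi : (π : ℂ) ≠ 0 := by exact_mod_cast Real.pi_ne_zero
  have him : 0 < τ.im := by
    have : τ = ((t / π : ℝ) : ℂ) * Complex.I := by rw [hτ]; push_cast; ring
    rw [this, Complex.im_ofReal_mul]
    simp only [Complex.I_im, mul_one]
    positivity
  have h := ((hasSum_jacobiTheta₂'_term (1/2 + τ/2) him).div_const (π * Complex.I)).add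
    (hasSum_jacobiTheta₂_term (1/2 + τ/2) him)
  refine h.congr_fun ?_ |> fun h => h
  intro n
  have key : jacobiTheta₂_term n (1/2 + τ/2) τ
      = (-1 : ℂ) ^ n * Complex.exp (-((n : ℂ) ^ 2 + n) * t) := by
    rw [jacobiTheta₂_term, ← Complex.exp_pi_mul_I, ← Complex.exp_int_mul, ← Complex.exp_add]
    congr 1
    rw [hτ]
    field_simp
    linear_combination ((n : ℂ) * t + n ^ 2 * t) * Complex.I_sq
  rw [jacobiTheta₂'_term, key]
  push_cast
  field_simp [Complex.I_ne_zero]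

lemma aux_summable (t : ℝ) (ht : 0 < t) :
    Summable (fun n : ℤ => (-1 : ℝ) ^ n * (2 * (n : ℝ) + 1) *
      Real.exp (-((n : ℝ) ^ 2 + (n : ℝ)) * t)) :=
  Complex.summable_ofReal.mp (aux_hasSum t ht _ rfl).summable

lemma aux_term (t : ℝ) (ht : 0 < t) (k : ℤ) :
    (-1 : ℝ) ^ k * (2 * (k : ℝ) + 1) * Real.exp (-(2 * (k : ℝ) + 1) ^ 2 * π ^ 2 / (4 * t))
    = Real.exp (-(π ^ 2 / t) / 4) * ((-1 : ℝ) ^ k * (2 * (k : ℝ) + 1) *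
      Real.exp (-((k : ℝ) ^ 2 + (k : ℝ)) * (π ^ 2 / t))) := by
  have : -(2 * (k : ℝ) + 1) ^ 2 * π ^ 2 / (4 * t)
      = -(π ^ 2 / t) / 4 + -((k : ℝ) ^ 2 + (k : ℝ)) * (π ^ 2 / t) := by
    field_simp
    ring
  rw [this, Real.exp_add]
  ring

lemma aux_identity (t : ℝ) (ht : 0 < t) :
    ∑' n : ℤ, (-1 : ℝ) ^ n * (2 * (n : ℝ) + 1) * Real.exp (-((n : ℝ) ^ 2 + (n : ℝ)) * t)
      = (1 / (t / π) ^ ((1 : ℝ) / 2)) * (π / t) * Real.exp (t / 4) *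
        (Real.exp (-(π ^ 2 / t) / 4) * ∑' k : ℤ, (-1 : ℝ) ^ k * (2 * (k : ℝ) + 1) *
      Real.exp (-((k : ℝ) ^ 2 + (k : ℝ)) * (π ^ 2 / t))) := by
  have hpi : (π : ℂ) ≠ 0 := by exact_mod_cast Real.pi_ne_zero
  have htc : (t : ℂ) ≠ 0 := by exact_mod_cast ht.ne'
  have hI := Complex.I_ne_zero
  obtain ⟨τ, hτ⟩ : ∃ τ : ℂ, τ = Complex.I * t / π := ⟨_, rfl⟩
  have hτ0 : τ ≠ 0 := by rw [hτ]; exact div_ne_zero (mul_ne_zero hI htc) hpi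
  obtain ⟨σ, hσ⟩ : ∃ σ : ℂ, σ = -1 / τ := ⟨_, rfl⟩
  have hσ' : σ = Complex.I * (π ^ 2 / t : ℝ) / π := by
    rw [hσ, hτ]
    push_cast
    field_simp
    linear_combination -Complex.I_sq
  have h1 := (aux_hasSum t ht τ hτ).tsum_eq
  have h2 := (aux_hasSum (π ^ 2 / t) (by positivity) σ hσ').tsum_eq
  rw [← Complex.ofReal_inj]
  push_cast [Complex.ofReal_tsum] at h1 h2 ⊢
  rw [h1, h2]
  have hz : (1/2 + τ/2) / τ = -(1/2 + σ/2) + 1 := by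
    rw [hσ]; field_simp; ring
  have e1 := jacobiTheta₂_functional_equation (1/2 + τ/2) τ
  have e2 := jacobiTheta₂'_functional_equation (1/2 + τ/2) τ
  rw [← hσ, hz, jacobiTheta₂_add_left, jacobiTheta₂_neg_left] at e1 e2
  rw [jacobiTheta₂'_add_left, jacobiTheta₂'_neg_left] at e2
  have hp : (-Complex.I * τ) ^ (1 / 2 : ℂ) = (((t / π) ^ ((1 : ℝ) / 2) : ℝ) : ℂ) := by
    rw [Complex.ofReal_cpow (by positivity)]
    push_cast
    congr 1
    rw [hτ]
    field_simp
    linear_combination -Complex.I_sq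
  have hE : Complex.exp (-π * Complex.I * (1/2 + τ/2) ^ 2 / τ)
      = -Complex.I * (Complex.exp (t / 4) * Complex.exp (-(π ^ 2 / t) / 4)) := by
    have : -π * Complex.I * (1/2 + τ/2) ^ 2 / τ
        = -(π / 2 * Complex.I) + (t / 4 + (-(π ^ 2 / t) / 4)) := by
      rw [hτ]
      field_simp
      ring_nf
      simp only [Complex.I_sq, Complex.I_pow_three]
      ring
    rw [this, Complex.exp_add, Complex.exp_add, Complex.exp_neg, Complex.exp_pi_div_two_mul_I,
      Complex.inv_I]
  rw [hp, hE] at e1 e2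
  rw [e1, e2]
  have hr : (((t / π) ^ ((1 : ℝ) / 2) : ℝ) : ℂ) ≠ 0 := by
    exact_mod_cast (Real.rpow_pos_of_pos (by positivity) _).ne'
  generalize (((t / π) ^ ((1 : ℝ) / 2) : ℝ) : ℂ) = r at *
  generalize jacobiTheta₂' (1/2 + σ/2) σ = A
  generalize jacobiTheta₂ (1/2 + σ/2) σ = B
  generalize Complex.exp (t / 4) = X
  generalize Complex.exp (-(π ^ 2 / t) / 4) = Y
  rw [hτ]
  field_simp
  ring_nf

/-- Poisson summation / Jacobi-type transformation for the spherical heat kernel series: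
`Σ_{n∈ℤ} (−1)ⁿ(2n+1)e^{−(n²+n)t}
  = π^{3/2} t^{−3/2} e^{t/4} Σ_{k∈ℤ} (−1)^k (2k+1) e^{−(2k+1)²π²/(4t)}`,
both series converging absolutely. -/
theorem sphere_heat_kernel_poisson_summation (t : ℝ) (ht : 0 < t) :
    Summable (fun n : ℤ => |(-1 : ℝ) ^ n * (2 * (n : ℝ) + 1) *
      Real.exp (-((n : ℝ) ^ 2 + (n : ℝ)) * t)|) ∧
    Summable (fun k : ℤ => |(-1 : ℝ) ^ k * (2 * (k : ℝ) + 1) *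
      Real.exp (-(2 * (k : ℝ) + 1) ^ 2 * π ^ 2 / (4 * t))|) ∧
    ∑' n : ℤ, (-1 : ℝ) ^ n * (2 * (n : ℝ) + 1) * Real.exp (-((n : ℝ) ^ 2 + (n : ℝ)) * t)
      = π ^ ((3 : ℝ) / 2) * t ^ (-(3 : ℝ) / 2) * Real.exp (t / 4) *
        ∑' k : ℤ, (-1 : ℝ) ^ k * (2 * (k : ℝ) + 1) *
          Real.exp (-(2 * (k : ℝ) + 1) ^ 2 * π ^ 2 / (4 * t)) := by
  have hs : 0 < π ^ 2 / t := by positivity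
  refine ⟨(aux_summable t ht).abs, ?_, ?_⟩
  · simp_rw [aux_term t ht]
    exact ((aux_summable _ hs).mul_left _).abs
  · simp_rw [aux_term t ht]
    rw [tsum_mul_left, aux_identity t ht]
    congr 2
    rw [Real.div_rpow ht.le Real.pi_pos.le, neg_div, Real.rpow_neg ht.le,
      show (3 : ℝ) / 2 = 1 / 2 + 1 by norm_num, Real.rpow_add ht, Real.rpow_add Real.pi_pos,
      Real.rpow_one, Real.rpow_one]
    have := (Real.rpow_pos_of_pos ht (1/2)).ne'
    have := (Real.rpow_pos_of_pos Real.pi_pos (1/2)).ne'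
    field_simp
end

section
/- lim_{t→0⁺} t^{3/2} · e^{π²/(4t)} · Σ_{n∈ℤ} (−1)ⁿ (2n+1) e^{−(n²+n)t} = 2π^{3/2}. Consequently, the heat kernel p_t(x, x̂) = (1/8π) Σ_{n∈ℤ}(−1)ⁿ(2n+1)e^{−(n²+n)t} between antipodal points of the unit 2-sphere satisfies p_t(x, x̂) ≃ (√π/4) t^{−3/2} e^{−π²/(4t)} as t → 0⁺, i.e. lim_{t→0⁺} 4 t^{3/2} e^{π²/(4t)} p_t(x,x̂)/√π = 1. -/
open Real Filter Set

/-- The alternating series is a multiple of the odd Hurwitz kernel at `1/4`. -/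
theorem hasSum_antipodal {t : ℝ} (ht : 0 < t) :
    HasSum (fun n : ℤ => (-1 : ℝ) ^ n * (2 * (n : ℝ) + 1) *
          Real.exp (-((n : ℝ) ^ 2 + (n : ℝ)) * t))
      (8 * Real.exp (t / 4) *
        HurwitzZeta.oddKernel (((1 / 4 : ℝ) : ℝ) : UnitAddCircle) (4 * t / π)) := by
  have hx : 0 < 4 * t / π := by positivity
  have h := (HurwitzZeta.hasSum_int_oddKernel (1 / 4) hx).mul_left (4 * Real.exp (t / 4))
  have key : ∀ k : ℤ, 4 * Real.exp (t / 4) * (((k : ℝ) + 1 / 4) *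
      Real.exp (-π * ((k : ℝ) + 1 / 4) ^ 2 * (4 * t / π))) =
      (4 * (k : ℝ) + 1) * Real.exp (-(4 * (k : ℝ) ^ 2 + 2 * k) * t) := by
    intro k
    have : -(4 * (k : ℝ) ^ 2 + 2 * k) * t =
        t / 4 + -π * ((k : ℝ) + 1 / 4) ^ 2 * (4 * t / π) := by
      field_simp
      ring
    rw [this, Real.exp_add]
    ring
  simp_rw [key] at h
  have i1 : Function.Injective (fun k : ℤ => 2 * k) := fun a b hab => by
    simp only at hab; omega
  have i2 : Function.Injective (fun k : ℤ => -2 * k - 1) := fun a b hab => by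
    simp only at hab; omega
  have hc : IsCompl (Set.range (fun k : ℤ => 2 * k)) (Set.range (fun k : ℤ => -2 * k - 1)) := by
    rw [isCompl_iff, Set.disjoint_left, codisjoint_iff, Set.top_eq_univ,
      Set.eq_univ_iff_forall]
    constructor
    · rintro _ ⟨a, rfl⟩ ⟨b, hb⟩
      simp only at hb
      omega
    · intro n
      rcases Int.even_or_odd' n with ⟨c, hn | hn⟩
      · exact Or.inl ⟨c, by simp only; omega⟩
      · exact Or.inr ⟨-c - 1, by simp only; omega⟩
  have h1 := i1.hasSum_range_iff (f := fun n : ℤ => (-1 : ℝ) ^ n * (2 * (n : ℝ) + 1) *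
          Real.exp (-((n : ℝ) ^ 2 + (n : ℝ)) * t))
        (a := 4 * Real.exp (t / 4) *
          HurwitzZeta.oddKernel (((1 / 4 : ℝ) : ℝ) : UnitAddCircle) (4 * t / π))
  have h2 := i2.hasSum_range_iff (f := fun n : ℤ => (-1 : ℝ) ^ n * (2 * (n : ℝ) + 1) *
          Real.exp (-((n : ℝ) ^ 2 + (n : ℝ)) * t))
        (a := 4 * Real.exp (t / 4) *
          HurwitzZeta.oddKernel (((1 / 4 : ℝ) : ℝ) : UnitAddCircle) (4 * t / π))
  have e1 := h1.2 (by
    refine h.congr_fun fun k => ?_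
    have : (-1 : ℝ) ^ (2 * k) = 1 := Even.neg_one_zpow (even_two_mul k)
    simp only [Function.comp, this]
    push_cast
    ring_nf)
  have e2 := h2.2 (by
    refine h.congr_fun fun k => ?_
    have : (-1 : ℝ) ^ (-2 * k - 1) = -1 := Odd.neg_one_zpow ⟨-k - 1, by ring⟩
    simp only [Function.comp, this]
    push_cast
    ring_nf)
  have e3 := HasSum.add_isCompl (f := fun n : ℤ => (-1 : ℝ) ^ n * (2 * (n : ℝ) + 1) *
          Real.exp (-((n : ℝ) ^ 2 + (n : ℝ)) * t)) hc e1 e2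
  have e4 : ∀ A B : ℝ, 4 * A * B + 4 * A * B = 8 * A * B := fun A B => by ring
  rw [e4] at e3
  exact e3

theorem tendsto_sinKernel_quarter :
    Tendsto (fun s : ℝ => Real.exp (π * s) *
      HurwitzZeta.sinKernel (((1 / 4 : ℝ) : ℝ) : UnitAddCircle) s) atTop (nhds 2) := by
  have hlim : Tendsto (fun s : ℝ => ∑' n : ℕ, Real.exp (π * s) *
      (2 * n * Real.sin (2 * π * (1 / 4) * n) * Real.exp (-π * n ^ 2 * s))) atTop
      (nhds (∑' n : ℕ, if n = 1 then (2 : ℝ) else 0)) := by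
    refine tendsto_tsum_of_dominated_convergence
      (bound := fun n => 2 * Real.exp π * HurwitzKernelBounds.f_nat 1 0 1 n)
      ((HurwitzKernelBounds.summable_f_nat 1 0 one_pos).mul_left _) ?_ ?_
    · intro n
      have e : ∀ s : ℝ, Real.exp (π * s) *
          (2 * n * Real.sin (2 * π * (1 / 4) * n) * Real.exp (-π * n ^ 2 * s)) =
          2 * n * Real.sin (2 * π * (1 / 4) * n) * Real.exp (-(π * ((n : ℝ) ^ 2 - 1) * s)) := by
        intro s
        have : -(π * ((n : ℝ) ^ 2 - 1) * s) = π * s + -π * n ^ 2 * s := by ring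
        rw [this, Real.exp_add]
        ring
      simp_rw [e]
      rcases Nat.lt_trichotomy n 1 with hn | rfl | hn
      · obtain rfl : n = 0 := by omega
        simp
      · have : 2 * π * 4⁻¹ = π / 2 := by ring
        simp [this]
      · rw [if_neg (by omega)]
        have hn' : (1 : ℝ) < n := by exact_mod_cast hn
        have hpos : 0 < π * ((n : ℝ) ^ 2 - 1) := mul_pos pi_pos (by nlinarith)
        have := (Real.tendsto_exp_neg_atTop_nhds_zero.comp
          (tendsto_id.const_mul_atTop hpos)).const_mul (2 * n * Real.sin (2 * π * (1 / 4) * n))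
        simpa using this
    · filter_upwards [eventually_ge_atTop 1] with s hs n
      rcases Nat.eq_zero_or_pos n with rfl | hn
      · simp [HurwitzKernelBounds.f_nat]
      have hn' : (1 : ℝ) ≤ n := by exact_mod_cast hn
      rw [HurwitzKernelBounds.f_nat, norm_mul, norm_mul, norm_mul, norm_mul,
        Real.norm_of_nonneg (Real.exp_pos _).le, Real.norm_of_nonneg (Real.exp_pos _).le,
        Real.norm_two, Real.norm_natCast, Real.norm_eq_abs]
      have hs1 := Real.abs_sin_le_one (2 * π * (1 / 4) * n)
      have hexp : Real.exp (π * s) * Real.exp (-π * n ^ 2 * s) ≤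
          Real.exp π * Real.exp (-π * n ^ 2 * 1) := by
        rw [← Real.exp_add, ← Real.exp_add, Real.exp_le_exp]
        have : 0 ≤ π * (((n : ℝ) ^ 2 - 1) * (s - 1)) :=
          mul_nonneg pi_pos.le (mul_nonneg (by nlinarith) (by linarith))
        nlinarith
      calc Real.exp (π * s) * (2 * n * |Real.sin (2 * π * (1 / 4) * n)| *
              Real.exp (-π * n ^ 2 * s))
          = 2 * n * (Real.exp (π * s) * Real.exp (-π * n ^ 2 * s)) *
              |Real.sin (2 * π * (1 / 4) * n)| := by ring
        _ ≤ 2 * n * (Real.exp (π * s) * Real.exp (-π * n ^ 2 * s)) * 1 := by gcongr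
        _ ≤ 2 * n * (Real.exp π * Real.exp (-π * n ^ 2 * 1)) * 1 := by gcongr
        _ = _ := by simp; ring
  rw [tsum_ite_eq] at hlim
  refine hlim.congr' ?_
  filter_upwards [eventually_gt_atTop 0] with s hs
  exact ((HurwitzZeta.hasSum_nat_sinKernel (1 / 4) hs).mul_left _).tsum_eq

theorem antipodal_first :
    Tendsto (fun t : ℝ => t ^ ((3:ℝ)/2) * Real.exp (π ^ 2 / (4 * t)) *
        ∑' n : ℤ, (-1 : ℝ) ^ n * (2 * (n : ℝ) + 1) *
          Real.exp (-((n : ℝ) ^ 2 + (n : ℝ)) * t))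
      (nhdsWithin 0 (Ioi 0)) (nhds (2 * π ^ ((3 : ℝ) / 2))) := by
  have hs : Tendsto (fun t : ℝ => π / 4 * t⁻¹) (nhdsWithin 0 (Ioi 0)) atTop :=
    tendsto_inv_nhdsGT_zero.const_mul_atTop (by positivity)
  have h1 := tendsto_sinKernel_quarter.comp hs
  have h2 : Tendsto (fun t : ℝ => π ^ ((3 : ℝ) / 2) * Real.exp (t / 4)) (nhdsWithin 0 (Ioi 0))
      (nhds (π ^ ((3 : ℝ) / 2))) := by
    have : ContinuousAt (fun t : ℝ => π ^ ((3 : ℝ) / 2) * Real.exp (t / 4)) 0 := by fun_prop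
    have := this.tendsto.mono_left (nhdsWithin_le_nhds (s := Ioi 0))
    simpa using this
  have h3 := h1.mul h2
  refine h3.congr' ?_
  filter_upwards [self_mem_nhdsWithin] with t ht
  have ht : 0 < t := ht
  have h4 : (4 : ℝ) ^ ((3 : ℝ) / 2) = 8 := by
    rw [show (4 : ℝ) = 2 ^ (2 : ℝ) by norm_num, ← Real.rpow_mul (by norm_num)]
    norm_num
  have hp : 0 < π ^ ((3 : ℝ) / 2) := by positivity
  have htp : 0 < t ^ ((3 : ℝ) / 2) := by positivity
  rw [(hasSum_antipodal ht).tsum_eq, HurwitzZeta.oddKernel_functional_equation,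
    Real.div_rpow (by positivity) pi_pos.le, Real.mul_rpow (by norm_num) ht.le, h4]
  have a1 : 1 / (4 * t / π) = π / 4 * t⁻¹ := by field_simp
  have a2 : π ^ 2 / (4 * t) = π * (π / 4 * t⁻¹) := by field_simp
  rw [a1, a2]
  simp only [Function.comp]
  field_simp

/-- Small-time asymptotics of the heat kernel between antipodal points on the unit
2-sphere: `lim_{t→0⁺} t^{3/2} e^{π²/(4t)} Σ_{n∈ℤ}(−1)ⁿ(2n+1)e^{−(n²+n)t} = 2π^{3/2}`;
consequently `p_t(x,x̂) = (1/8π) Σ_{n∈ℤ}(−1)ⁿ(2n+1)e^{−(n²+n)t}` satisfies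
`lim_{t→0⁺} 4 t^{3/2} e^{π²/(4t)} p_t(x,x̂)/√π = 1`. -/
theorem sphere_heat_kernel_antipodal_asymptotics :
    Tendsto (fun t : ℝ => t ^ ((3:ℝ)/2) * Real.exp (π ^ 2 / (4 * t)) *
        ∑' n : ℤ, (-1 : ℝ) ^ n * (2 * (n : ℝ) + 1) *
          Real.exp (-((n : ℝ) ^ 2 + (n : ℝ)) * t))
      (nhdsWithin 0 (Ioi 0)) (nhds (2 * π ^ ((3 : ℝ) / 2))) ∧
    Tendsto (fun t : ℝ => 4 * t ^ ((3:ℝ)/2) * Real.exp (π ^ 2 / (4 * t)) *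
        ((1 / (8 * π)) * ∑' n : ℤ, (-1 : ℝ) ^ n * (2 * (n : ℝ) + 1) *
          Real.exp (-((n : ℝ) ^ 2 + (n : ℝ)) * t)) / Real.sqrt π)
      (nhdsWithin 0 (Ioi 0)) (nhds 1) := by
  refine ⟨antipodal_first, ?_⟩
  have hsq : π ^ ((3 : ℝ) / 2) = π * Real.sqrt π := by
    rw [Real.sqrt_eq_rpow, show (3 : ℝ) / 2 = 1 + 1 / 2 by norm_num, Real.rpow_add pi_pos,
      Real.rpow_one]
  have h := antipodal_first.const_mul (4 * (1 / (8 * π)) / Real.sqrt π)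
  have hs : 0 < Real.sqrt π := Real.sqrt_pos.2 pi_pos
  have hv : 4 * (1 / (8 * π)) / Real.sqrt π * (2 * π ^ ((3 : ℝ) / 2)) = 1 := by
    rw [hsq]
    field_simp
    norm_num
  rw [hv] at h
  refine h.congr fun t => ?_
  ring
end
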